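/- For all m, n ∈ ℕ with n ≥ 3 and m ≥ n+3, there exist full-dimensional polytopes P ⊂ ℝⁿ and Q ⊂ ℝᵐ, each equipped with an irredundant description, and a linear map π : ℝᵐ → ℝⁿ with π(Q) = P, such that C(P) ⊆ π(C(Q)), the map π is not injective (and P and Q are not affinely isomorphic: no affine map restricts to a bijection from Q onto P), and some circuit in C(P) is not an edge direction of P. -/

import Mathlib

open Matrix

noncomputable section

/-- The polyhedron `{x : Ax = b, Bx ≤ d}`. -/
def polySet {p q n : Type*} [Fintype n] (A : Matrix p n ℝ) (b : p → ℝ)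
    (B : Matrix q n ℝ) (d : q → ℝ) : Set (n → ℝ) :=
  {x | A.mulVec x = b ∧ B.mulVec x ≤ d}

/-- The circuits of the linear description `Ax = b, Bx ≤ d`: nonzero kernel elements `g` of `A`
whose support of `Bg` is inclusion-minimal among nonzero kernel elements. -/
def circuits {p q n : Type*} [Fintype n] (A : Matrix p n ℝ) (B : Matrix q n ℝ) :
    Set (n → ℝ) :=
  {g | A.mulVec g = 0 ∧ g ≠ 0 ∧
    ∀ y : n → ℝ, A.mulVec y = 0 → y ≠ 0 →
      {i | B.mulVec y i ≠ 0} ⊆ {i | B.mulVec g i ≠ 0} →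
      {i | B.mulVec g i ≠ 0} ⊆ {i | B.mulVec y i ≠ 0}}

/-- A face of a polyhedron `P`: either `P` itself or the set of maximizers of a linear
functional over `P` whose supremum is finite and attained. -/
def IsFace {n : Type*} [Fintype n] (P F : Set (n → ℝ)) : Prop :=
  F = P ∨ ∃ (c : n → ℝ) (s : ℝ),
    (∀ y ∈ P, c ⬝ᵥ y ≤ s) ∧ (∃ y ∈ P, c ⬝ᵥ y = s) ∧ F = {x ∈ P | c ⬝ᵥ x = s}

/-- The dimension of the affine span of a set. -/
def spanDim {n : Type*} [Fintype n] (S : Set (n → ℝ)) : ℕ :=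
  Module.finrank ℝ (affineSpan ℝ S).direction

def IsVertex {n : Type*} [Fintype n] (P : Set (n → ℝ)) (v : n → ℝ) : Prop :=
  IsFace P {v}

def IsEdge {n : Type*} [Fintype n] (P F : Set (n → ℝ)) : Prop :=
  IsFace P F ∧ spanDim F = 1

/-- A nonzero vector lying in the direction space of the affine span of some edge of `P`. -/
def IsEdgeDirection {n : Type*} [Fintype n] (P : Set (n → ℝ)) (g : n → ℝ) : Prop :=
  g ≠ 0 ∧ ∃ F, IsEdge P F ∧ g ∈ (affineSpan ℝ F).direction

/-- A facet: a face whose affine span has dimension `dim P - 1`. -/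
def IsFacet {n : Type*} [Fintype n] (P F : Set (n → ℝ)) : Prop :=
  IsFace P F ∧ spanDim F + 1 = spanDim P

/-- A pointed set: contains no affine line. -/
def PointedSet {n : Type*} [Fintype n] (P : Set (n → ℝ)) : Prop :=
  ∀ x v : n → ℝ, (∀ t : ℝ, x + t • v ∈ P) → v = 0

/-- `Ax = b, Bx ≤ d` is an irredundant description of `P`. -/
def Irredundant {p q n : Type*} [Fintype n] (A : Matrix p n ℝ) (b : p → ℝ)
    (B : Matrix q n ℝ) (d : q → ℝ) (P : Set (n → ℝ)) : Prop :=
  P = polySet A b B d ∧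
  {x | A.mulVec x = b} = (affineSpan ℝ P : Set (n → ℝ)) ∧
  ∀ i, IsFacet P {x ∈ P | B.mulVec x i = d i}

/-- A basic solution of the system `Ax = b, Bx ≤ d`: satisfies the equalities, and the rows of
`A` together with the tight rows of `B` span the whole space. -/
def IsBasicSolution {p q n : Type*} [Fintype n] (A : Matrix p n ℝ) (b : p → ℝ)
    (B : Matrix q n ℝ) (d : q → ℝ) (g : n → ℝ) : Prop :=
  A.mulVec g = b ∧
  Submodule.span ℝ (Set.range (fun i => A i) ∪
    (fun i => B i) '' {i | B.mulVec g i = d i}) = ⊤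

/-!
Both polytopes are unit cubes in which the facet `x_a = 1` is tilted to `x_a = 1 + x_b + x_c`. The
vector `e_b - e_c` is a circuit because the tilted row vanishes on it. It is not an edge direction:
an edge in this direction has a relative interior point with `0 < x_b < 1`, and there `x_b` can be
moved without `x_c`, the tilted row being kept tight, if need be, by moving `x_a` along.

Forgetting coordinates other than `a, b, c` projects a tilted cube onto a smaller one, and extending
circuits by zero lifts them back. An affine map that is injective on a full-dimensional polytope is
injective on the whole space, so the dimensions exclude a bijection.
-/

open Filter Function Topology

section Polyhedra

variable {p q ι : Type*} [Fintype ι]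
  {A : Matrix p ι ℝ} {b : p → ℝ} {B : Matrix q ι ℝ} {d : q → ℝ}

/-- The linear subspace parallel to the minimal face through `x` of `{x : Ax = b, Bx ≤ d}`: the
vectors annihilated by `A` and by every row of `B` that is tight at `x`. -/
def tightSpace (A : Matrix p ι ℝ) (B : Matrix q ι ℝ) (d : q → ℝ) (x : ι → ℝ) :
    Submodule ℝ (ι → ℝ) :=
  LinearMap.ker A.mulVecLin ⊓
    ⨅ i ∈ {i | (B *ᵥ x) i = d i}, LinearMap.ker (LinearMap.proj i ∘ₗ B.mulVecLin)

lemma mem_tightSpace {x v : ι → ℝ} :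
    v ∈ tightSpace A B d x ↔ A *ᵥ v = 0 ∧ ∀ i, (B *ᵥ x) i = d i → (B *ᵥ v) i = 0 := by
  simp [tightSpace]

lemma tightSpace_eq_ker_of_lt {x : ι → ℝ} (hx : ∀ i, (B *ᵥ x) i < d i) :
    tightSpace A B d x = LinearMap.ker A.mulVecLin := by
  simp [tightSpace, (hx _).ne]

lemma tightSpace_eq_ker_inf_ker {x : ι → ℝ} {i : q} (hi : (B *ᵥ x) i = d i)
    (hx : ∀ j ≠ i, (B *ᵥ x) j < d j) :
    tightSpace A B d x =
      LinearMap.ker A.mulVecLin ⊓ LinearMap.ker (LinearMap.proj i ∘ₗ B.mulVecLin) := by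
  have tight_iff (j : q) : (B *ᵥ x) j = d j ↔ j = i :=
    ⟨fun hj => by_contra fun hne => (hx j hne).ne hj, fun hj => hj ▸ hi⟩
  simp [tightSpace, tight_iff]

lemma eventually_add_smul_mem_polySet [Finite q] {x v : ι → ℝ} (hx : x ∈ polySet A b B d)
    (hv : v ∈ tightSpace A B d x) : ∀ᶠ t : ℝ in 𝓝 0, x + t • v ∈ polySet A b B d := by
  obtain ⟨hAv, hBv⟩ := mem_tightSpace.1 hv
  have row_le (i : q) : ∀ᶠ t : ℝ in 𝓝 0, (B *ᵥ x) i + t * (B *ᵥ v) i ≤ d i := by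
    rcases (hx.2 i).eq_or_lt with htight | hlt
    · exact Eventually.of_forall fun t => by rw [hBv i htight, mul_zero, add_zero, htight]
    · have hcont : Continuous fun t : ℝ => (B *ᵥ x) i + t * (B *ᵥ v) i := by fun_prop
      exact ((hcont.tendsto' 0 _ (by simp)).eventually_lt_const hlt).mono fun _ => le_of_lt
  filter_upwards [eventually_all.2 row_le] with t ht
  refine ⟨?_, fun i => ?_⟩
  · rw [mulVec_add, mulVec_smul, hAv, smul_zero, add_zero, hx.1]
  · simpa [mulVec_add, mulVec_smul] using ht i

lemma exists_pos_add_sub_smul_mem_polySet [Finite q] {x v : ι → ℝ} (hx : x ∈ polySet A b B d)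
    (hv : v ∈ tightSpace A B d x) :
    ∃ ε : ℝ, 0 < ε ∧ x + ε • v ∈ polySet A b B d ∧ x - ε • v ∈ polySet A b B d := by
  have hboth : ∀ᶠ t : ℝ in 𝓝 0, x + t • v ∈ polySet A b B d ∧ x - t • v ∈ polySet A b B d := by
    simpa only [smul_neg, ← sub_eq_add_neg] using (eventually_add_smul_mem_polySet hx hv).and
      (eventually_add_smul_mem_polySet hx (neg_mem hv))
  obtain ⟨ε, hε, hmem⟩ := hboth.exists_gt
  exact ⟨ε, hε, hmem⟩

lemma convex_polySet : Convex ℝ (polySet A b B d) :=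
  ((convex_singleton b).linear_preimage A.mulVecLin).inter
    ((convex_Iic d).linear_preimage B.mulVecLin)

lemma IsFace.subset {P F : Set (ι → ℝ)} (hF : IsFace P F) : F ⊆ P := by
  rcases hF with rfl | ⟨c, s, -, -, rfl⟩
  exacts [subset_rfl, Set.sep_subset _ _]

lemma IsFace.convex {P F : Set (ι → ℝ)} (hF : IsFace P F) (hP : Convex ℝ P) : Convex ℝ F := by
  rcases hF with rfl | ⟨c, s, -, -, rfl⟩
  exacts [hP, hP.inter ((convex_singleton s).linear_preimage (dotProductBilin ℝ ℝ c))]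

lemma IsFace.tightSpace_le_direction [Finite q] {F : Set (ι → ℝ)}
    (hF : IsFace (polySet A b B d) F) {x : ι → ℝ} (hx : x ∈ F) :
    tightSpace A B d x ≤ (affineSpan ℝ F).direction := by
  intro v hv
  obtain ⟨c, s, hle, rfl⟩ : ∃ (c : ι → ℝ) (s : ℝ), (∀ y ∈ polySet A b B d, c ⬝ᵥ y ≤ s) ∧
      F = {y ∈ polySet A b B d | c ⬝ᵥ y = s} := by
    rcases hF with rfl | ⟨c, s, hle, -, hFeq⟩
    exacts [⟨0, 0, by simp, by simp⟩, ⟨c, s, hle, hFeq⟩]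
  obtain ⟨ε, hε, hplus, hminus⟩ := exists_pos_add_sub_smul_mem_polySet hx.1 hv
  have hc : c ⬝ᵥ (x + ε • v) = s := by
    have h₁ := hle _ hplus
    have h₂ := hle _ hminus
    simp only [dotProduct_add, dotProduct_sub, hx.2] at h₁ h₂ ⊢
    linarith
  have hεv := AffineSubspace.vsub_mem_direction
    (subset_affineSpan ℝ {y ∈ polySet A b B d | c ⬝ᵥ y = s} ⟨hplus, hc⟩) (subset_affineSpan ℝ _ hx)
  rw [vsub_eq_sub, add_sub_cancel_left] at hεv
  exact (Submodule.smul_mem_iff _ hε.ne').1 hεv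

lemma IsFace.direction_affineSpan_eq_tightSpace [Finite q] {F : Set (ι → ℝ)}
    (hF : IsFace (polySet A b B d) F) {x : ι → ℝ} (hx : x ∈ F)
    (htight : ∀ i, (B *ᵥ x) i = d i → ∀ y ∈ F, (B *ᵥ y) i = d i) :
    (affineSpan ℝ F).direction = tightSpace A B d x := by
  refine le_antisymm ?_ (hF.tightSpace_le_direction hx)
  rw [direction_affineSpan, vectorSpan_def, Submodule.span_le]
  rintro _ ⟨y, hy, z, hz, rfl⟩
  change y - z ∈ tightSpace A B d x
  refine mem_tightSpace.2 ⟨?_, fun i hi => ?_⟩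
  · rw [mulVec_sub, (hF.subset hy).1, (hF.subset hz).1, sub_self]
  · rw [mulVec_sub, Pi.sub_apply, htight i hi y hy, htight i hi z hz, sub_self]

lemma mem_polySet_of_lt {x : ι → ℝ} (hA : A *ᵥ x = b) (hB : ∀ i, (B *ᵥ x) i < d i) :
    x ∈ polySet A b B d :=
  ⟨hA, fun i => (hB i).le⟩

lemma direction_affineSpan_polySet [Finite q] {x : ι → ℝ} (hA : A *ᵥ x = b)
    (hB : ∀ i, (B *ᵥ x) i < d i) :
    (affineSpan ℝ (polySet A b B d)).direction = LinearMap.ker A.mulVecLin := by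
  rw [← tightSpace_eq_ker_of_lt hB]
  exact IsFace.direction_affineSpan_eq_tightSpace (Or.inl rfl) (mem_polySet_of_lt hA hB)
    fun i hi => absurd hi (hB i).ne

lemma coe_affineSpan_polySet [Finite q] {x : ι → ℝ} (hA : A *ᵥ x = b)
    (hB : ∀ i, (B *ᵥ x) i < d i) :
    (affineSpan ℝ (polySet A b B d) : Set (ι → ℝ)) = {y | A *ᵥ y = b} := by
  ext y
  rw [SetLike.mem_coe, ← AffineSubspace.vsub_right_mem_direction_iff_mem
    (subset_affineSpan ℝ _ (mem_polySet_of_lt hA hB)), direction_affineSpan_polySet hA hB]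
  simp [mulVec_sub, hA, sub_eq_zero]

lemma finrank_inf_ker_add_one {V : Type*} [AddCommGroup V] [Module ℝ V] [FiniteDimensional ℝ V]
    {K : Submodule ℝ V} {f : Module.Dual ℝ V} {v : V} (hv : v ∈ K) (hfv : f v ≠ 0) :
    Module.finrank ℝ (K ⊓ LinearMap.ker f : Submodule ℝ V) + 1 = Module.finrank ℝ K := by
  have hne : f.domRestrict K ≠ 0 := fun h => hfv (LinearMap.congr_fun h ⟨v, hv⟩)
  rw [← Module.Dual.finrank_ker_add_one_of_ne_zero hne, LinearMap.ker_domRestrict,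
    ← Submodule.map_comap_subtype, Submodule.finrank_map_subtype_eq]

lemma isFacet_polySet [Finite q] {x₀ x : ι → ℝ} (hA₀ : A *ᵥ x₀ = b)
    (hB₀ : ∀ j, (B *ᵥ x₀) j < d j) {i : q} (hA : A *ᵥ x = b) (hi : (B *ᵥ x) i = d i)
    (hB : ∀ j ≠ i, (B *ᵥ x) j < d j) :
    IsFacet (polySet A b B d) {y ∈ polySet A b B d | (B *ᵥ y) i = d i} := by
  have hx : x ∈ polySet A b B d :=
    ⟨hA, fun j => (eq_or_ne j i).elim (fun h => h ▸ hi.le) fun h => (hB j h).le⟩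
  have hface : IsFace (polySet A b B d) {y ∈ polySet A b B d | (B *ᵥ y) i = d i} :=
    Or.inr ⟨B i, d i, fun y hy => hy.2 i, ⟨x, hx, hi⟩, rfl⟩
  have hdir := hface.direction_affineSpan_eq_tightSpace ⟨hx, hi⟩ fun j hj y hy => by
    obtain rfl : j = i := by_contra fun hne => (hB j hne).ne hj
    exact hy.2
  refine ⟨hface, ?_⟩
  rw [spanDim, spanDim, hdir, tightSpace_eq_ker_inf_ker hi hB, direction_affineSpan_polySet hA₀ hB₀]
  refine finrank_inf_ker_add_one (v := x - x₀) ?_ ?_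
  · simp [mulVec_sub, hA, hA₀]
  · simpa [mulVec_sub, hi, sub_eq_zero] using (hB₀ i).ne'

lemma irredundant_of_exists_tight [Finite q] {x₀ : ι → ℝ} (hA₀ : A *ᵥ x₀ = b)
    (hB₀ : ∀ i, (B *ᵥ x₀) i < d i)
    (hB : ∀ i, ∃ x, A *ᵥ x = b ∧ (B *ᵥ x) i = d i ∧ ∀ j ≠ i, (B *ᵥ x) j < d j) :
    Irredundant A b B d (polySet A b B d) := by
  refine ⟨rfl, (coe_affineSpan_polySet hA₀ hB₀).symm, fun i => ?_⟩
  obtain ⟨x, hA, hi, hj⟩ := hB i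
  exact isFacet_polySet hA₀ hB₀ hA hi hj

lemma disjoint_ker_of_injOn_polySet [Finite q] {V : Type*} [AddCommGroup V] [Module ℝ V]
    {x : ι → ℝ} (hA : A *ᵥ x = b) (hB : ∀ i, (B *ᵥ x) i < d i) {σ : (ι → ℝ) →ᵃ[ℝ] V}
    (hσ : Set.InjOn σ (polySet A b B d)) :
    Disjoint (LinearMap.ker A.mulVecLin) (LinearMap.ker σ.linear) := by
  rw [Submodule.disjoint_def]
  intro v hAv hσv
  have hx := mem_polySet_of_lt hA hB
  rw [← tightSpace_eq_ker_of_lt hB] at hAv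
  obtain ⟨ε, hε, hmem, -⟩ := exists_pos_add_sub_smul_mem_polySet hx hAv
  have hσ_eq : σ (x + ε • v) = σ x := by
    rw [add_comm, ← vadd_eq_add, σ.map_vadd, map_smul, LinearMap.mem_ker.1 hσv, smul_zero,
      zero_vadd]
  exact (smul_eq_zero.1 (add_eq_left.1 (hσ hmem hx hσ_eq))).resolve_left hε.ne'

lemma IsEdgeDirection.direction_eq_span {P : Set (ι → ℝ)} {g : ι → ℝ}
    (hg : IsEdgeDirection P g) :
    ∃ F, IsFace P F ∧ (affineSpan ℝ F).direction = ℝ ∙ g := by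
  obtain ⟨hg₀, F, ⟨hF, hdim⟩, hgF⟩ := hg
  refine ⟨F, hF, (Submodule.eq_of_le_of_finrank_eq ?_ ?_).symm⟩
  · rwa [Submodule.span_singleton_le_iff_mem]
  · rw [finrank_span_singleton hg₀]
    exact hdim.symm

lemma IsEdgeDirection.exists_tightSpace_eq_span [Finite q] {g : ι → ℝ}
    (hg : IsEdgeDirection (polySet A b B d) g) :
    ∃ x ∈ polySet A b B d, tightSpace A B d x = ℝ ∙ g := by
  obtain ⟨F, hF, hdir⟩ := hg.direction_eq_span
  have hnontriv : F.Nontrivial := by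
    rw [← Set.not_subsingleton_iff]
    intro hsub
    rw [direction_affineSpan, vectorSpan_of_subsingleton ℝ hsub] at hdir
    exact hg.1 (Submodule.span_singleton_eq_bot.1 hdir.symm)
  obtain ⟨x, hx, y, hy, hxy⟩ := hnontriv
  have hr : midpoint ℝ x y ∈ F := (hF.convex convex_polySet).midpoint_mem hx hy
  -- Rows that are tight at the midpoint of `x` and `y` are tight at both `x` and `y`.
  have hsub_mem : y - x ∈ tightSpace A B d (midpoint ℝ x y) := by
    refine mem_tightSpace.2 ⟨?_, fun i hi => ?_⟩
    · rw [mulVec_sub, (hF.subset hy).1, (hF.subset hx).1, sub_self]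
    · have hxi := (hF.subset hx).2 i
      have hyi := (hF.subset hy).2 i
      simp only [midpoint_eq_smul_add, mulVec_smul, mulVec_add, Pi.smul_apply, Pi.add_apply,
        smul_eq_mul, invOf_eq_inv] at hi
      rw [mulVec_sub, Pi.sub_apply]
      linarith
  obtain ⟨a, ha⟩ := Submodule.mem_span_singleton.1 <| hdir ▸ AffineSubspace.vsub_mem_direction
    (subset_affineSpan ℝ F hy) (subset_affineSpan ℝ F hx)
  have ha₀ : a ≠ 0 := by
    rintro rfl
    exact hxy (sub_eq_zero.1 (ha.symm.trans (zero_smul ℝ g))).symm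
  refine ⟨midpoint ℝ x y, hF.subset hr, le_antisymm (hdir ▸ hF.tightSpace_le_direction hr) ?_⟩
  rw [Submodule.span_singleton_le_iff_mem, ← Submodule.smul_mem_iff _ ha₀, ha]
  exact hsub_mem

lemma mem_circuits_of_tightSpace_eq_span {g : ι → ℝ} (hg₀ : g ≠ 0)
    (hg : tightSpace A B 0 g = ℝ ∙ g) : g ∈ circuits A B := by
  have hAg : A *ᵥ g = 0 := (mem_tightSpace.1 (hg ▸ Submodule.mem_span_singleton_self g)).1
  refine ⟨hAg, hg₀, fun y hAy hy₀ hsub => ?_⟩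
  have hy : y ∈ tightSpace A B 0 g :=
    mem_tightSpace.2 ⟨hAy, fun i hi => by_contra fun hne => hsub hne hi⟩
  obtain ⟨t, rfl⟩ := Submodule.mem_span_singleton.1 (hg ▸ hy)
  have ht : t ≠ 0 := left_ne_zero_of_smul hy₀
  intro i hi
  simpa [mulVec_smul, ht] using hi

section Lift

variable {p' q' κ : Type*} [Fintype κ] {A' : Matrix p' κ ℝ} {B' : Matrix q' κ ℝ}

lemma map_mem_circuits {L : (ι → ℝ) →ₗ[ℝ] (κ → ℝ)} (hL : Injective L) {f : q → q'}
    (hf : Injective f) (hA : ∀ x, A' *ᵥ L x = 0 ↔ A *ᵥ x = 0)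
    (hB : ∀ x, B' *ᵥ L x = extend f (B *ᵥ x) 0)
    (hlift : ∀ y, A' *ᵥ y = 0 → (∀ i ∉ Set.range f, (B' *ᵥ y) i = 0) → y ∈ LinearMap.range L)
    {g : ι → ℝ} (hg : g ∈ circuits A B) : L g ∈ circuits A' B' := by
  obtain ⟨hAg, hg₀, hmin⟩ := hg
  have hsupp (x : ι → ℝ) : {i | (B' *ᵥ L x) i ≠ 0} = f '' {i | (B *ᵥ x) i ≠ 0} := by
    rw [hB]
    exact support_extend_zero hf
  refine ⟨(hA g).2 hAg, (map_ne_zero_iff L hL).2 hg₀, fun y hAy hy₀ hsub => ?_⟩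
  obtain ⟨x, rfl⟩ := hlift y hAy fun i hi => by
    by_contra hne
    rw [hsupp] at hsub
    exact hi (Set.image_subset_range _ _ (hsub hne))
  rw [hsupp, hsupp, Set.image_subset_image_iff hf] at hsub ⊢
  exact hmin x ((hA x).1 hAy) ((map_ne_zero_iff L hL).1 hy₀) hsub

end Lift

section Reindex

variable {q' : Type*} (e : q' ≃ q)

lemma polySet_submatrix : polySet A b (B.submatrix e id) (d ∘ e) = polySet A b B d := by
  ext x
  exact and_congr_right fun _ => e.forall_congr_right (q := fun i => (B *ᵥ x) i ≤ d i)

lemma circuits_submatrix : circuits A (B.submatrix e id) = circuits A B := by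
  ext g
  have hsupp (x y : ι → ℝ) :
      {i | (B.submatrix e id *ᵥ x) i ≠ 0} ⊆ {i | (B.submatrix e id *ᵥ y) i ≠ 0} ↔
        {i | (B *ᵥ x) i ≠ 0} ⊆ {i | (B *ᵥ y) i ≠ 0} :=
    e.forall_congr_right (q := fun i => (B *ᵥ x) i ≠ 0 → (B *ᵥ y) i ≠ 0)
  simp only [circuits, hsupp]

lemma Irredundant.submatrix {P : Set (ι → ℝ)} (h : Irredundant A b B d P) :
    Irredundant A b (B.submatrix e id) (d ∘ e) P :=
  ⟨h.1.trans (polySet_submatrix e).symm, h.2.1, fun i => h.2.2 (e i)⟩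

end Reindex

end Polyhedra

section TiltedCube

/-- The right-hand sides of the description of the tilted cube: `0` for the rows `Sum.inl i` and
`1` for the rows `Sum.inr i`. -/
def tiltedCubeBound (ι : Type*) : ι ⊕ ι → ℝ :=
  Sum.elim 0 1

@[simp]
lemma tiltedCubeBound_inl {ι : Type*} (i : ι) : tiltedCubeBound ι (Sum.inl i) = 0 := rfl

@[simp]
lemma tiltedCubeBound_inr {ι : Type*} (i : ι) : tiltedCubeBound ι (Sum.inr i) = 1 := rfl

variable {ι κ : Type*} [Fintype ι] [DecidableEq ι] [Fintype κ] [DecidableEq κ] {a b c : ι}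

/-- The constraint matrix of the tilted cube: the rows `Sum.inl i` read `-xᵢ`, and the rows
`Sum.inr i` read `xᵢ`, except for `Sum.inr a`, which reads `x_a - x_b - x_c`. -/
def tiltedCubeMatrix (a b c : ι) : Matrix (ι ⊕ ι) ι ℝ :=
  fromRows (-1) (1 - (Matrix.single a b 1 + Matrix.single a c 1))

/-- The cube `[0, 1]^ι` with its facet `x_a = 1` tilted to `x_a = 1 + x_b + x_c`. There are no
equations. -/
def tiltedCube (a b c : ι) : Set (ι → ℝ) :=
  polySet (0 : Matrix (Fin 0) ι ℝ) 0 (tiltedCubeMatrix a b c) (tiltedCubeBound ι)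

lemma tiltedCubeMatrix_mulVec_inl (x : ι → ℝ) (i : ι) :
    (tiltedCubeMatrix a b c *ᵥ x) (Sum.inl i) = -x i := by
  simp [tiltedCubeMatrix, fromRows_mulVec, neg_mulVec]

lemma tiltedCubeMatrix_mulVec_inr (x : ι → ℝ) (i : ι) :
    (tiltedCubeMatrix a b c *ᵥ x) (Sum.inr i) = x i - if i = a then x b + x c else 0 := by
  by_cases h : i = a <;>
    simp [tiltedCubeMatrix, fromRows_mulVec, sub_mulVec, add_mulVec, single_mulVec_eq, h]

lemma mem_tiltedCube {x : ι → ℝ} :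
    x ∈ tiltedCube a b c ↔
      (∀ i, 0 ≤ x i) ∧ ∀ i, x i ≤ 1 + if i = a then x b + x c else 0 := by
  simp [tiltedCube, polySet, Pi.le_def, tiltedCubeMatrix_mulVec_inl, tiltedCubeMatrix_mulVec_inr]

lemma tiltedCubeMatrix_mulVec_half_lt (s : ι ⊕ ι) :
    (tiltedCubeMatrix a b c *ᵥ fun _ => 1 / 2) s < tiltedCubeBound ι s := by
  rcases s with i | i
  · norm_num [tiltedCubeMatrix_mulVec_inl]
  · rw [tiltedCubeMatrix_mulVec_inr]
    split_ifs <;> norm_num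

lemma spanDim_tiltedCube : spanDim (tiltedCube a b c) = Fintype.card ι := by
  rw [spanDim, tiltedCube, direction_affineSpan_polySet (Subsingleton.elim _ _)
    tiltedCubeMatrix_mulVec_half_lt, mulVecLin_zero, LinearMap.ker_zero, finrank_top,
    Module.finrank_fintype_fun_eq_card]

lemma irredundant_tiltedCube (hab : a ≠ b) (hac : a ≠ c) :
    Irredundant (0 : Matrix (Fin 0) ι ℝ) 0 (tiltedCubeMatrix a b c) (tiltedCubeBound ι)
      (tiltedCube a b c) := by
  refine irredundant_of_exists_tight (Subsingleton.elim _ _) tiltedCubeMatrix_mulVec_half_lt ?_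
  rintro (i | i)
  · refine ⟨update (fun _ => 1 / 2) i 0, Subsingleton.elim _ _, ?_, ?_⟩
    · simp [tiltedCubeMatrix_mulVec_inl]
    rintro (j | j) hj
    · have hji : j ≠ i := fun h => hj (congrArg Sum.inl h)
      norm_num [tiltedCubeMatrix_mulVec_inl, hji]
    · simp only [tiltedCubeMatrix_mulVec_inr, update_apply, tiltedCubeBound_inr]
      split_ifs <;> norm_num
  · refine ⟨update (fun _ => 1 / 2) i (if i = a then 2 else 1), Subsingleton.elim _ _, ?_, ?_⟩
    · rw [tiltedCubeMatrix_mulVec_inr, update_self]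
      split_ifs with h
      · subst h
        norm_num [hab.symm, hac.symm]
      · norm_num
    rintro (j | j) hj
    · simp only [tiltedCubeMatrix_mulVec_inl, update_apply, tiltedCubeBound_inl]
      split_ifs <;> norm_num
    · have hji : j ≠ i := fun h => hj (congrArg Sum.inr h)
      simp only [tiltedCubeMatrix_mulVec_inr, update_apply, if_neg hji, tiltedCubeBound_inr]
      split_ifs <;> norm_num

lemma isBounded_tiltedCube (hab : a ≠ b) (hac : a ≠ c) :
    Bornology.IsBounded (tiltedCube a b c) := by
  refine (Metric.isBounded_Icc (0 : ι → ℝ) fun _ => 3).subset fun x hx => ?_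
  obtain ⟨hlo, hup⟩ := mem_tiltedCube.1 hx
  have hb := hup b
  have hc := hup c
  rw [if_neg hab.symm] at hb
  rw [if_neg hac.symm] at hc
  refine ⟨hlo, fun i => (hup i).trans ?_⟩
  dsimp only
  split_ifs <;> linarith

lemma single_sub_single_mem_circuits (hab : a ≠ b) (hac : a ≠ c) (hbc : b ≠ c) :
    (Pi.single b 1 - Pi.single c 1 : ι → ℝ) ∈
      circuits (0 : Matrix (Fin 0) ι ℝ) (tiltedCubeMatrix a b c) := by
  set g : ι → ℝ := Pi.single b 1 - Pi.single c 1 with hg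
  have hgb : g b = 1 := by simp [hg, hbc]
  have hgc : g c = -1 := by simp [hg, hbc.symm]
  have hgi : ∀ i, i ≠ b → i ≠ c → g i = 0 := fun i hb hc => by simp [hg, hb, hc]
  refine mem_circuits_of_tightSpace_eq_span (ne_iff.2 ⟨b, by simp [hgb]⟩)
    (le_antisymm (fun y hy => ?_) ?_)
  · have hrow := (mem_tightSpace.1 hy).2
    have hyi : ∀ i, i ≠ b → i ≠ c → y i = 0 := fun i hb hc => by
      simpa [tiltedCubeMatrix_mulVec_inl, hgi i hb hc] using hrow (Sum.inl i)
    have hybc : y b + y c = 0 := by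
      have ha := hrow (Sum.inr a)
      simp only [tiltedCubeMatrix_mulVec_inr, hgi a hab hac, hyi a hab hac, hgb, hgc, if_true,
        Pi.zero_apply, add_neg_cancel, sub_self, forall_const] at ha
      linarith
    refine Submodule.mem_span_singleton.2 ⟨y b, funext fun i => ?_⟩
    by_cases hib : i = b
    · simp [hib, hgb]
    by_cases hic : i = c
    · simp [hic, hgc, ← eq_neg_of_add_eq_zero_right hybc]
    · simp [hgi i hib hic, hyi i hib hic]
  · rw [Submodule.span_singleton_le_iff_mem, mem_tightSpace]
    exact ⟨Subsingleton.elim _ _, fun _ => id⟩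

lemma exists_mem_tightSpace_tiltedCube (hab : a ≠ b) (hac : a ≠ c) (hbc : b ≠ c) {x : ι → ℝ}
    (hx : x ∈ tiltedCube a b c) (hb₀ : x b ≠ 0) (hb₁ : x b ≠ 1) :
    ∃ v ∈ tightSpace (0 : Matrix (Fin 0) ι ℝ) (tiltedCubeMatrix a b c) (tiltedCubeBound ι) x,
      v b = 1 ∧ v c = 0 := by
  have hlo := (mem_tiltedCube.1 hx).1
  set δ : ℝ := if x a = 1 + (x b + x c) then 1 else 0 with hδ
  set v : ι → ℝ := Pi.single b 1 + δ • Pi.single a 1 with hv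
  have hva : v a = δ := by simp [hv, hab]
  have hvb : v b = 1 := by simp [hv, hab.symm]
  have hvi (i : ι) (ha : i ≠ a) (hb : i ≠ b) : v i = 0 := by simp [hv, ha, hb]
  have hvc : v c = 0 := hvi c hac.symm hbc.symm
  refine ⟨v, mem_tightSpace.2 ⟨Subsingleton.elim _ _, ?_⟩, hvb, hvc⟩
  rintro (i | i) hi
  · rw [tiltedCubeMatrix_mulVec_inl, tiltedCubeBound_inl, neg_eq_zero] at hi
    rw [tiltedCubeMatrix_mulVec_inl, neg_eq_zero]
    by_cases hia : i = a
    · subst hia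
      have hslack : x i ≠ 1 + (x b + x c) := by linarith [hlo b, hlo c]
      rw [hva, hδ, if_neg hslack]
    · exact hvi i hia fun hib => hb₀ (hib ▸ hi)
  · rw [tiltedCubeMatrix_mulVec_inr, tiltedCubeBound_inr] at hi
    rw [tiltedCubeMatrix_mulVec_inr]
    by_cases hia : i = a
    · subst hia
      rw [if_pos rfl, sub_eq_iff_eq_add] at hi
      rw [if_pos rfl, hva, hδ, if_pos hi, hvb, hvc, add_zero, sub_self]
    · rw [if_neg hia, sub_zero] at hi ⊢
      exact hvi i hia fun hib => hb₁ (hib ▸ hi)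

lemma not_isEdgeDirection_single_sub_single (hab : a ≠ b) (hac : a ≠ c) (hbc : b ≠ c) :
    ¬ IsEdgeDirection (tiltedCube a b c) (Pi.single b 1 - Pi.single c 1) := by
  intro hedge
  obtain ⟨x, hx, hspan⟩ := hedge.exists_tightSpace_eq_span
  set g : ι → ℝ := Pi.single b 1 - Pi.single c 1 with hg
  have hgb : g b = 1 := by simp [hg, hbc]
  have hgc : g c = -1 := by simp [hg, hbc.symm]
  have hrow := (mem_tightSpace.1 (hspan ▸ Submodule.mem_span_singleton_self g)).2
  have hb₀ : x b ≠ 0 := fun h => by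
    simpa [tiltedCubeMatrix_mulVec_inl, hgb, h] using hrow (Sum.inl b)
  have hb₁ : x b ≠ 1 := fun h => by
    simpa [tiltedCubeMatrix_mulVec_inr, hab.symm, hgb, h] using hrow (Sum.inr b)
  obtain ⟨v, hv, hvb, hvc⟩ := exists_mem_tightSpace_tiltedCube hab hac hbc hx hb₀ hb₁
  obtain ⟨t, rfl⟩ := Submodule.mem_span_singleton.1 (hspan ▸ hv)
  simp only [Pi.smul_apply, smul_eq_mul, hgb, hgc] at hvb hvc
  linarith

lemma linear_injective_of_injOn_tiltedCube {V : Type*} [AddCommGroup V] [Module ℝ V]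
    {σ : (ι → ℝ) →ᵃ[ℝ] V} (hσ : Set.InjOn σ (tiltedCube a b c)) : Injective σ.linear := by
  have hdisj := disjoint_ker_of_injOn_polySet (Subsingleton.elim _ _)
    tiltedCubeMatrix_mulVec_half_lt hσ
  rw [← LinearMap.ker_eq_bot]
  simpa using hdisj

variable {e : ι → κ}

lemma tiltedCubeMatrix_mulVec_comp (he : Injective e) (y : κ → ℝ) (s : ι ⊕ ι) :
    (tiltedCubeMatrix (e a) (e b) (e c) *ᵥ y) (Sum.map e e s) =
      (tiltedCubeMatrix a b c *ᵥ (y ∘ e)) s := by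
  rcases s with i | i
  · simp [tiltedCubeMatrix_mulVec_inl]
  · simp [tiltedCubeMatrix_mulVec_inr, he.eq_iff]

lemma tiltedCubeMatrix_mulVec_extend (he : Injective e) (x : ι → ℝ) :
    tiltedCubeMatrix (e a) (e b) (e c) *ᵥ extend e x 0 =
      extend (Sum.map e e) (tiltedCubeMatrix a b c *ᵥ x) 0 := by
  have hf : Injective (Sum.map e e) := he.sumMap he
  funext s
  by_cases hs : ∃ t, Sum.map e e t = s
  · obtain ⟨t, rfl⟩ := hs
    rw [tiltedCubeMatrix_mulVec_comp he, extend_comp he, hf.extend_apply]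
  rw [extend_apply' _ _ _ hs]
  rcases s with j | j
  · have hj : ¬∃ i, e i = j := fun ⟨i, hi⟩ => hs ⟨Sum.inl i, congrArg Sum.inl hi⟩
    simp [tiltedCubeMatrix_mulVec_inl, extend_apply' _ _ _ hj]
  · have hj : ¬∃ i, e i = j := fun ⟨i, hi⟩ => hs ⟨Sum.inr i, congrArg Sum.inr hi⟩
    have hja : j ≠ e a := fun h => hj ⟨a, h.symm⟩
    simp [tiltedCubeMatrix_mulVec_inr, extend_apply' _ _ _ hj, hja]

lemma image_funLeft_tiltedCube (he : Injective e) :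
    LinearMap.funLeft ℝ ℝ e '' tiltedCube (e a) (e b) (e c) = tiltedCube a b c := by
  refine Set.Subset.antisymm ?_ fun x hx => ⟨extend e x 0, ?_, extend_comp he x 0⟩
  · rintro _ ⟨y, hy, rfl⟩
    refine ⟨Subsingleton.elim _ _, fun s => ?_⟩
    have hs := hy.2 (Sum.map e e s)
    rw [tiltedCubeMatrix_mulVec_comp he] at hs
    rcases s with i | i <;> exact hs
  · refine ⟨Subsingleton.elim _ _, ?_⟩
    rw [tiltedCubeMatrix_mulVec_extend he]
    intro s
    by_cases hs : ∃ t, Sum.map e e t = s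
    · obtain ⟨t, rfl⟩ := hs
      rw [(he.sumMap he).extend_apply]
      rcases t with i | i <;> exact hx.2 _
    · rw [extend_apply' _ _ _ hs]
      rcases s with j | j <;> simp

lemma extend_mem_circuits_tiltedCubeMatrix (he : Injective e) {g : ι → ℝ}
    (hg : g ∈ circuits (0 : Matrix (Fin 0) ι ℝ) (tiltedCubeMatrix a b c)) :
    extend e g 0 ∈
      circuits (0 : Matrix (Fin 0) κ ℝ) (tiltedCubeMatrix (e a) (e b) (e c)) := by
  refine map_mem_circuits (L := ExtendByZero.linearMap ℝ e) (extend_injective he (0 : κ → ℝ))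
    (he.sumMap he) (by simp) (tiltedCubeMatrix_mulVec_extend he) (fun y _ hy => ?_) hg
  refine ⟨y ∘ e, funext fun j => ?_⟩
  rw [ExtendByZero.linearMap_apply]
  by_cases hj : ∃ i, e i = j
  · obtain ⟨i, rfl⟩ := hj
    rw [he.extend_apply, Function.comp_apply]
  · have hyj := hy (Sum.inl j) (by simpa using hj)
    rw [tiltedCubeMatrix_mulVec_inl, neg_eq_zero] at hyj
    rw [extend_apply' _ _ _ hj, hyj, Pi.zero_apply]

end TiltedCube

theorem stmt_19_general (n m : ℕ) (hn : 3 ≤ n) (hm : n < m) :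
    ∃ (pP qP pQ qQ : ℕ)
      (AP : Matrix (Fin pP) (Fin n) ℝ) (bP : Fin pP → ℝ)
      (BP : Matrix (Fin qP) (Fin n) ℝ) (dP : Fin qP → ℝ)
      (AQ : Matrix (Fin pQ) (Fin m) ℝ) (bQ : Fin pQ → ℝ)
      (BQ : Matrix (Fin qQ) (Fin m) ℝ) (dQ : Fin qQ → ℝ)
      (P : Set (Fin n → ℝ)) (Q : Set (Fin m → ℝ))
      (π : (Fin m → ℝ) →ₗ[ℝ] (Fin n → ℝ)),
      Irredundant AP bP BP dP P ∧ Irredundant AQ bQ BQ dQ Q ∧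
      Bornology.IsBounded P ∧ Bornology.IsBounded Q ∧
      spanDim P = n ∧ spanDim Q = m ∧
      (fun x => π x) '' Q = P ∧
      circuits AP BP ⊆ (fun x => π x) '' circuits AQ BQ ∧
      ¬ Function.Injective π ∧
      (¬ ∃ σ : (Fin m → ℝ) →ᵃ[ℝ] (Fin n → ℝ), Set.BijOn σ Q P) ∧
      ∃ g ∈ circuits AP BP, ¬ IsEdgeDirection P g := by
  have not_injective (f : (Fin m → ℝ) →ₗ[ℝ] (Fin n → ℝ)) : ¬ Injective f := fun hf =>
    hm.not_ge (by simpa using LinearMap.finrank_le_finrank_of_injective hf)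
  obtain ⟨a, b, c, hab, hac, hbc⟩ : ∃ a b c : Fin n, a ≠ b ∧ a ≠ c ∧ b ≠ c :=
    Fintype.two_lt_card_iff.1 (by rwa [Fintype.card_fin])
  have he : Injective (Fin.castLE hm.le) := Fin.castLE_injective hm.le
  refine ⟨0, n + n, 0, m + m, 0, 0, _, _, 0, 0, _, _, tiltedCube a b c, _,
    LinearMap.funLeft ℝ ℝ (Fin.castLE hm.le),
    (irredundant_tiltedCube hab hac).submatrix finSumFinEquiv.symm,
    (irredundant_tiltedCube (he.ne hab) (he.ne hac)).submatrix finSumFinEquiv.symm,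
    isBounded_tiltedCube hab hac, isBounded_tiltedCube (he.ne hab) (he.ne hac),
    by simp [spanDim_tiltedCube], by simp [spanDim_tiltedCube],
    image_funLeft_tiltedCube he, ?_, not_injective _, ?_, Pi.single b 1 - Pi.single c 1, ?_,
    not_isEdgeDirection_single_sub_single hab hac hbc⟩
  · rw [circuits_submatrix, circuits_submatrix]
    exact fun g hg => ⟨_, extend_mem_circuits_tiltedCubeMatrix he hg, extend_comp he g 0⟩
  · rintro ⟨σ, hσ⟩
    exact not_injective _ (linear_injective_of_injOn_tiltedCube hσ.injOn)
  · rw [circuits_submatrix]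
    exact single_sub_single_mem_circuits hab hac hbc

/-- For all `n ≥ 3` and `m ≥ n+3` there exist full-dimensional polytopes
`P ⊂ ℝⁿ`, `Q ⊂ ℝᵐ` with irredundant descriptions and a linear `π` with `π(Q) = P` such that
`C(P) ⊆ π(C(Q))`, `π` is not injective (and no affine map restricts to a bijection from `Q`
onto `P`), yet some circuit of `P` is not an edge direction of `P`. -/
theorem stmt_19 (n m : ℕ) (hn : 3 ≤ n) (hm : n + 3 ≤ m) :
    ∃ (pP qP pQ qQ : ℕ)
      (AP : Matrix (Fin pP) (Fin n) ℝ) (bP : Fin pP → ℝ)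
      (BP : Matrix (Fin qP) (Fin n) ℝ) (dP : Fin qP → ℝ)
      (AQ : Matrix (Fin pQ) (Fin m) ℝ) (bQ : Fin pQ → ℝ)
      (BQ : Matrix (Fin qQ) (Fin m) ℝ) (dQ : Fin qQ → ℝ)
      (P : Set (Fin n → ℝ)) (Q : Set (Fin m → ℝ))
      (π : (Fin m → ℝ) →ₗ[ℝ] (Fin n → ℝ)),
      Irredundant AP bP BP dP P ∧ Irredundant AQ bQ BQ dQ Q ∧
      -- P and Q are full-dimensional polytopes
      Bornology.IsBounded P ∧ Bornology.IsBounded Q ∧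
      spanDim P = n ∧ spanDim Q = m ∧
      (fun x => π x) '' Q = P ∧
      circuits AP BP ⊆ (fun x => π x) '' circuits AQ BQ ∧
      ¬ Function.Injective π ∧
      (¬ ∃ σ : (Fin m → ℝ) →ᵃ[ℝ] (Fin n → ℝ), Set.BijOn σ Q P) ∧
      ∃ g ∈ circuits AP BP, ¬ IsEdgeDirection P g :=
  stmt_19_general n m hn (by omega)
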